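/- arXiv:2306.12401 — 9 statements merged into one kernel-verified Lean document; each statement's English description precedes it below -/
import Mathlib

section
/- Let n ≥ 2 be an integer, let m > 0 and 0 ≤ δ < 1 be constants, and let g, ψ : [0,n] → ℝ be continuously differentiable with g'(y) ≥ m and |ψ'(y)| ≤ δ g'(y) for all y ∈ [0,n]. Then for every continuously differentiable φ : [0,n] → ℝ, |∫₀ⁿ (ln(g'(y) + ψ'(y)) − ln g'(y)) φ'(y) dy| ≤ (1/((1−δ)m)) · (∫₀ⁿ ψ'(y)² dy)^{1/2} · (∫₀ⁿ φ'(y)² dy)^{1/2}. -/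
/-!
Pointwise, `ln (a + b) - ln a = ln (1 + b / a)`, and `|b| ≤ δ a` keeps both `a` and `a + b` above
`(1 - δ) a ≥ (1 - δ) m`. The tangent-line bound `ln x ≤ x - 1`, applied to `(a + b) / a` and to its
inverse, then gives `|ln (a + b) - ln a| ≤ |b| / ((1 - δ) m)` (`abs_log_add_sub_log_le`).
Integrating against `|φ'|` reduces the claim to the Cauchy–Schwarz inequality for
`∫ |ψ'| |φ'|` (`integral_abs_mul_abs_le_sqrt_mul_sqrt`).
-/

open MeasureTheory Set

lemma log_sub_log_le_div {x y : ℝ} (hx : 0 < x) (hy : 0 < y) :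
    Real.log x - Real.log y ≤ (x - y) / y := by
  have h := Real.log_le_sub_one_of_pos (div_pos hx hy)
  rwa [Real.log_div hx.ne' hy.ne', div_sub_one hy.ne'] at h

lemma abs_log_add_sub_log_le {m δ a b : ℝ} (hm : 0 < m) (hδ0 : 0 ≤ δ) (hδ1 : δ < 1)
    (ha : m ≤ a) (hb : |b| ≤ δ * a) :
    |Real.log (a + b) - Real.log a| ≤ 1 / ((1 - δ) * m) * |b| := by
  have hc : 0 < (1 - δ) * m := mul_pos (by linarith) hm
  have ha0 : 0 < a := hm.trans_le ha
  have hca : (1 - δ) * m ≤ a := by nlinarith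
  have hcab : (1 - δ) * m ≤ a + b := by nlinarith [neg_abs_le b]
  have hab0 : 0 < a + b := hc.trans_le hcab
  have h1 := log_sub_log_le_div hab0 ha0
  have h2 := log_sub_log_le_div ha0 hab0
  have h3 : (a + b - a) / a ≤ |b| / ((1 - δ) * m) :=
    div_le_div₀ (abs_nonneg b) (by linarith [le_abs_self b]) hc hca
  have h4 : (a - (a + b)) / (a + b) ≤ |b| / ((1 - δ) * m) :=
    div_le_div₀ (abs_nonneg b) (by linarith [neg_abs_le b]) hc hcab
  rw [one_div_mul_eq_div, abs_le]
  constructor <;> linarith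

/-- Cauchy–Schwarz on an interval, from the nonpositive discriminant of the nonnegative quadratic
`t ↦ ∫ (t |u| + |v|)²`. -/
lemma integral_abs_mul_abs_le_sqrt_mul_sqrt {a b : ℝ} (hab : a ≤ b) {u v : ℝ → ℝ}
    (hu : ContinuousOn u (Icc a b)) (hv : ContinuousOn v (Icc a b)) :
    ∫ y in a..b, |u y| * |v y| ≤
      Real.sqrt (∫ y in a..b, u y ^ 2) * Real.sqrt (∫ y in a..b, v y ^ 2) := by
  have iuu : IntervalIntegrable (fun y => u y ^ 2) volume a b :=
    (hu.pow 2).intervalIntegrable_of_Icc hab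
  have ivv : IntervalIntegrable (fun y => v y ^ 2) volume a b :=
    (hv.pow 2).intervalIntegrable_of_Icc hab
  have iuv : IntervalIntegrable (fun y => |u y| * |v y|) volume a b :=
    (hu.abs.mul hv.abs).intervalIntegrable_of_Icc hab
  have hA : 0 ≤ ∫ y in a..b, u y ^ 2 :=
    intervalIntegral.integral_nonneg hab fun y _ => sq_nonneg _
  have hquad : ∀ t : ℝ, 0 ≤ (∫ y in a..b, u y ^ 2) * (t * t) +
      (2 * ∫ y in a..b, |u y| * |v y|) * t + ∫ y in a..b, v y ^ 2 := by
    intro t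
    have h0 : 0 ≤ ∫ y in a..b, (t * |u y| + |v y|) ^ 2 :=
      intervalIntegral.integral_nonneg hab fun y _ => sq_nonneg _
    have h1 : ∫ y in a..b, (t * |u y| + |v y|) ^ 2 =
        ∫ y in a..b, (t * t * u y ^ 2 + 2 * t * (|u y| * |v y|) + v y ^ 2) := by
      congr 1
      funext y
      rw [← sq_abs (u y), ← sq_abs (v y)]
      ring
    rw [h1, intervalIntegral.integral_add ((iuu.const_mul _).add (iuv.const_mul _)) ivv,
      intervalIntegral.integral_add (iuu.const_mul _) (iuv.const_mul _),
      intervalIntegral.integral_const_mul, intervalIntegral.integral_const_mul] at h0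
    linarith
  have hd := discrim_le_zero hquad
  rw [discrim] at hd
  rw [← Real.sqrt_mul hA]
  exact Real.le_sqrt_of_sq_le (by linarith)

/-- Lipschitz estimate for the derivative of the SRB entropy functional:
if `g' ≥ m > 0` and `|ψ'| ≤ δ g'` with `0 ≤ δ < 1`, then for every C¹ function `φ`,
`|∫₀ⁿ (ln(g'+ψ') - ln g') φ' dy| ≤ (1/((1-δ)m)) (∫₀ⁿ ψ'²)^{1/2} (∫₀ⁿ φ'²)^{1/2}`. -/
theorem srb_entropy_derivative_lipschitz (n : ℕ) (hn : 2 ≤ n) (m δ : ℝ)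
    (hm : 0 < m) (hδ0 : 0 ≤ δ) (hδ1 : δ < 1)
    (g g' ψ ψ' : ℝ → ℝ)
    (hg : ∀ y ∈ Icc (0:ℝ) (n:ℝ), HasDerivWithinAt g (g' y) (Icc (0:ℝ) (n:ℝ)) y)
    (hg'cont : ContinuousOn g' (Icc (0:ℝ) (n:ℝ)))
    (hψ : ∀ y ∈ Icc (0:ℝ) (n:ℝ), HasDerivWithinAt ψ (ψ' y) (Icc (0:ℝ) (n:ℝ)) y)
    (hψ'cont : ContinuousOn ψ' (Icc (0:ℝ) (n:ℝ)))
    (hgm : ∀ y ∈ Icc (0:ℝ) (n:ℝ), m ≤ g' y)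
    (hψδ : ∀ y ∈ Icc (0:ℝ) (n:ℝ), |ψ' y| ≤ δ * g' y) :
    ∀ φ φ' : ℝ → ℝ,
      (∀ y ∈ Icc (0:ℝ) (n:ℝ), HasDerivWithinAt φ (φ' y) (Icc (0:ℝ) (n:ℝ)) y) →
      ContinuousOn φ' (Icc (0:ℝ) (n:ℝ)) →
      |∫ y in (0:ℝ)..(n:ℝ), (Real.log (g' y + ψ' y) - Real.log (g' y)) * φ' y| ≤
        (1 / ((1 - δ) * m)) * Real.sqrt (∫ y in (0:ℝ)..(n:ℝ), (ψ' y) ^ 2) *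
          Real.sqrt (∫ y in (0:ℝ)..(n:ℝ), (φ' y) ^ 2) := by
  intro φ φ' _ hφ'cont
  have h0n : (0 : ℝ) ≤ n := Nat.cast_nonneg n
  have hbound : ∀ y ∈ Ioc (0 : ℝ) n,
      ‖(Real.log (g' y + ψ' y) - Real.log (g' y)) * φ' y‖ ≤
        1 / ((1 - δ) * m) * (|ψ' y| * |φ' y|) := by
    intro y hy
    have hy' := Ioc_subset_Icc_self hy
    rw [Real.norm_eq_abs, abs_mul, ← mul_assoc]
    exact mul_le_mul_of_nonneg_right
      (abs_log_add_sub_log_le hm hδ0 hδ1 (hgm y hy') (hψδ y hy')) (abs_nonneg _)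
  have hint : IntervalIntegrable (fun y => 1 / ((1 - δ) * m) * (|ψ' y| * |φ' y|)) volume 0 n :=
    ((hψ'cont.abs.mul hφ'cont.abs).intervalIntegrable_of_Icc h0n).const_mul _
  have hle := intervalIntegral.norm_integral_le_of_norm_le h0n
    (Filter.Eventually.of_forall hbound) hint
  rw [intervalIntegral.integral_const_mul, Real.norm_eq_abs] at hle
  have hc : 0 ≤ 1 / ((1 - δ) * m) :=
    one_div_nonneg.mpr (mul_nonneg (by linarith) hm.le)
  rw [mul_assoc]
  exact hle.trans (mul_le_mul_of_nonneg_left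
    (integral_abs_mul_abs_le_sqrt_mul_sqrt h0n hψ'cont hφ'cont) hc)
end

section
/- Let n ≥ 2 be an integer, let h : ℝ → ℝ be measurable, periodic with period n, and satisfy m ≤ h(y) ≤ 1 for some m > 0, and let ψ : ℝ → ℝ be periodic with period n, square-integrable on [0,n], and satisfy Σ_{i=0}^{n−1} ψ(y+i) = 0 for almost every y. Define R_h(y) = −ln h(y) + (1/n) Σ_{i=0}^{n−1} ln h(y+i). Then (a) Σ_{i=0}^{n−1} R_h(y+i) = 0 for every y, and (b) ∫₀ⁿ R_h(y) ψ(y) dy = −∫₀ⁿ ln h(y) ψ(y) dy. -/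
open MeasureTheory Set

/-!
Write `g = log ∘ h` and let `S y = ∑ i < n, g (y + i)` be its sum over a fibre of `y ↦ y mod 1`.
Since `g` is `n`-periodic, `S` is `1`-periodic (`periodic_sum_range`), so `R_h = -g + S / n` is `-g`
minus its fibre average, and its fibre sums vanish. For the integral identity it remains to see that
`∫₀ⁿ S ψ = 0` (`integral_mul_eq_zero_of_sum_eq_zero`): cutting `[0, n]` into unit intervals and
translating each to `[0, 1]` turns this integral into `∫₀¹ S(y) ∑ i < n, ψ (y + i) dy`.
Integrability is not an issue, since `g` is bounded and `ψ` is in `L²`, hence in `L¹`,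
on the bounded interval `[0, n]`.
-/

/-- The shift by `1` drops the term `g y` and adds the term `g (y + n)`, which are equal. -/
lemma periodic_sum_range {n : ℕ} {g : ℝ → ℝ} (hg : Function.Periodic g (n : ℝ)) :
    Function.Periodic (fun y => ∑ i ∈ Finset.range n, g (y + (i : ℝ))) 1 := by
  intro y
  have h1 := Finset.sum_range_succ (fun i : ℕ => g (y + (i : ℝ))) n
  have h2 := Finset.sum_range_succ' (fun i : ℕ => g (y + (i : ℝ))) n
  have h3 : ∑ i ∈ Finset.range n, g (y + 1 + (i : ℝ)) =
      ∑ i ∈ Finset.range n, g (y + ((i + 1 : ℕ) : ℝ)) :=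
    Finset.sum_congr rfl fun i _ => by push_cast; ring_nf
  have h4 := hg y
  simp only [Nat.cast_zero, add_zero] at h2
  change ∑ i ∈ Finset.range n, g (y + 1 + (i : ℝ)) = ∑ i ∈ Finset.range n, g (y + (i : ℝ))
  linarith

/-- A function with vanishing fibre sums is orthogonal to every `1`-periodic function. -/
lemma integral_mul_eq_zero_of_sum_eq_zero {n : ℕ} {S ψ : ℝ → ℝ} (hS : Function.Periodic S 1)
    (hint : IntervalIntegrable (fun y => S y * ψ y) volume 0 (n : ℝ))
    (hψsum : ∀ᵐ y ∂volume, ∑ i ∈ Finset.range n, ψ (y + (i : ℝ)) = 0) :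
    ∫ y in (0 : ℝ)..(n : ℝ), S y * ψ y = 0 := by
  have hpiece : ∀ k < n,
      IntervalIntegrable (fun y => S y * ψ y) volume ((k : ℕ) : ℝ) ((k + 1 : ℕ) : ℝ) := by
    intro k hk
    have hk' : ((k + 1 : ℕ) : ℝ) ≤ n := by exact_mod_cast hk
    apply hint.mono_set
    rw [uIcc_of_le (by push_cast; linarith), uIcc_of_le (by positivity)]
    exact Icc_subset_Icc (by positivity) hk'
  have hSi : ∀ (i : ℕ) (y : ℝ), S (y + (i : ℝ)) = S y := fun i y => by
    simpa using hS.nat_mul i y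
  have hshift : ∀ k : ℕ, ∫ y in ((k : ℕ) : ℝ)..((k + 1 : ℕ) : ℝ), S y * ψ y =
      ∫ y in (0 : ℝ)..1, S y * ψ (y + (k : ℝ)) := by
    intro k
    have := intervalIntegral.integral_comp_add_right (a := 0) (b := 1)
      (fun y => S y * ψ y) (k : ℝ)
    simp only [hSi] at this
    rw [this]
    congr 1 <;> push_cast <;> ring
  have hshiftInt : ∀ k < n,
      IntervalIntegrable (fun y => S y * ψ (y + (k : ℝ))) volume 0 1 := by
    intro k hk
    have := (hpiece k hk).comp_add_right (k : ℝ)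
    simpa [hSi] using this
  have hsplit := intervalIntegral.sum_integral_adjacent_intervals
    (a := fun k : ℕ => (k : ℝ)) hpiece
  simp only [Nat.cast_zero] at hsplit
  rw [← hsplit, Finset.sum_congr rfl fun k _ => hshift k,
    ← intervalIntegral.integral_finsetSum fun k hk => hshiftInt k (Finset.mem_range.mp hk)]
  apply intervalIntegral.integral_zero_ae
  filter_upwards [hψsum] with y hy _
  rw [← Finset.mul_sum, hy, mul_zero]

/-- For `h : ℝ → ℝ` measurable, `n`-periodic with `m ≤ h ≤ 1` (`m > 0`), and
`ψ` `n`-periodic, square-integrable on `[0,n]`, with `Σ_{i<n} ψ(y+i) = 0` a.e., the function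
`R_h(y) = -ln h(y) + (1/n) Σ_{i<n} ln h(y+i)` satisfies
(a) `Σ_{i<n} R_h(y+i) = 0` for every `y`, and
(b) `∫₀ⁿ R_h ψ dy = -∫₀ⁿ ln h ψ dy`. -/
theorem riesz_representation_srb_gradient (n : ℕ) (hn : 2 ≤ n) (m : ℝ) (hm : 0 < m)
    (h ψ : ℝ → ℝ) (hmeas : Measurable h)
    (hper : Function.Periodic h (n:ℝ))
    (hbd : ∀ y, m ≤ h y ∧ h y ≤ 1)
    (hψper : Function.Periodic ψ (n:ℝ))
    (hψmeas : Measurable ψ)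
    (hψsq : IntervalIntegrable (fun y => (ψ y) ^ 2) volume 0 (n:ℝ))
    (hψsum : ∀ᵐ y ∂volume, ∑ i ∈ Finset.range n, ψ (y + (i:ℝ)) = 0) :
    (∀ y : ℝ, ∑ i ∈ Finset.range n,
        (-Real.log (h (y + (i:ℝ))) +
          (1 / (n:ℝ)) * ∑ j ∈ Finset.range n, Real.log (h (y + (i:ℝ) + (j:ℝ)))) = 0) ∧
    (∫ y in (0:ℝ)..(n:ℝ),
        (-Real.log (h y) + (1 / (n:ℝ)) * ∑ i ∈ Finset.range n, Real.log (h (y + (i:ℝ)))) * ψ y =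
      -∫ y in (0:ℝ)..(n:ℝ), Real.log (h y) * ψ y) := by
  have hn0 : (n : ℝ) ≠ 0 := by positivity
  have hgper : Function.Periodic (fun y => Real.log (h y)) (n : ℝ) := hper.comp Real.log
  have hS := periodic_sum_range hgper
  refine ⟨fun y => ?_, ?_⟩
  · have hSi : ∀ i : ℕ, ∑ j ∈ Finset.range n, Real.log (h (y + (i : ℝ) + (j : ℝ))) =
        ∑ j ∈ Finset.range n, Real.log (h (y + (j : ℝ))) := fun i => by
      simpa using hS.nat_mul i y
    simp only [hSi, Finset.sum_add_distrib, Finset.sum_neg_distrib, Finset.sum_const,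
      Finset.card_range, nsmul_eq_mul]
    field_simp
    ring
  · have hgmeas : Measurable fun y => Real.log (h y) := Real.measurable_log.comp hmeas
    have hgbd : ∀ y, ‖Real.log (h y)‖ ≤ -Real.log m := fun y => by
      have h1 := Real.log_le_log hm (hbd y).1
      have h2 := Real.log_nonpos (hm.le.trans (hbd y).1) (hbd y).2
      rw [Real.norm_eq_abs, abs_of_nonpos h2]
      linarith
    -- `|ψ| ≤ 1 + ψ²` gives `L² ⊆ L¹` on a bounded interval.
    have hψint : IntervalIntegrable ψ volume 0 (n : ℝ) := by
      refine ((intervalIntegrable_const (c := (1 : ℝ))).add hψsq).mono_fun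
        hψmeas.aestronglyMeasurable (ae_of_all _ fun y => ?_)
      simp only [Real.norm_eq_abs]
      rw [abs_of_nonneg (a := 1 + ψ y ^ 2) (by positivity)]
      nlinarith [sq_nonneg (|ψ y| - 1), sq_abs (ψ y)]
    have hgψ : ∀ c : ℝ,
        IntervalIntegrable (fun y => Real.log (h (y + c)) * ψ y) volume 0 (n : ℝ) := fun c => by
      rw [intervalIntegrable_iff] at hψint ⊢
      exact hψint.bdd_mul (hgmeas.comp (measurable_add_const c)).aestronglyMeasurable
        (ae_of_all _ fun y => hgbd (y + c))
    have hg0 : IntervalIntegrable (fun y => Real.log (h y) * ψ y) volume 0 (n : ℝ) := by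
      simpa using hgψ 0
    have hSψ : IntervalIntegrable
        (fun y => (∑ i ∈ Finset.range n, Real.log (h (y + (i : ℝ)))) * ψ y) volume 0 (n : ℝ) := by
      simp only [Finset.sum_mul]
      have := IntervalIntegrable.sum (Finset.range n) fun i _ => hgψ (i : ℝ)
      simpa [Finset.sum_fn] using this
    have hzero := integral_mul_eq_zero_of_sum_eq_zero hS hSψ hψsum
    have hneg : IntervalIntegrable (fun y => -(Real.log (h y) * ψ y)) volume 0 (n : ℝ) := hg0.neg
    simp only [add_mul, neg_mul, mul_assoc]
    rw [intervalIntegral.integral_add hneg (hSψ.const_mul _), intervalIntegral.integral_neg,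
      intervalIntegral.integral_const_mul, hzero, mul_zero, add_zero]
end

section
/- Let n ≥ 2 be an integer, let u : ℝ → ℝ be bounded measurable and periodic with period n, and let ψ : ℝ → ℝ be periodic with period n, integrable on [0,n], and satisfy Σ_{i=0}^{n−1} ψ(y+i) = 0 for almost every y. Then ∫₀ⁿ (Σ_{i=0}^{n−1} u(y+i)) ψ(y) dy = 0. -/
/-!
Translating the `i`-th term by `i`, which is harmless because the integrand has period `n`, moves
the shift from `u` to `ψ` (`integral_shift_mul`):
`∫₀ⁿ u(y+i) ψ(y) dy = ∫₀ⁿ u(y) ψ(y-i) dy`. Summing over `i`, the integral becomes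
`∫₀ⁿ u(y) (Σ_{i<n} ψ(y-i)) dy`. Reversing the order of summation, the inner sum is the vanishing
sum `Σ_{j<n} ψ(z+j)` at `z = y-(n-1)`, so it is zero for almost every `y`.
-/

open MeasureTheory Set

theorem integral_shift_mul {T : ℝ} {u ψ : ℝ → ℝ} (hu : Function.Periodic u T)
    (hψ : Function.Periodic ψ T) (c : ℝ) :
    ∫ y in (0:ℝ)..T, u (y + c) * ψ y = ∫ y in (0:ℝ)..T, u y * ψ (y - c) := by
  have hper : Function.Periodic (fun y => u y * ψ (y - c)) T := hu.mul (hψ.sub_const c)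
  have h1 := intervalIntegral.integral_comp_add_right (a := 0) (b := T)
    (fun y => u y * ψ (y - c)) c
  have h2 := hper.intervalIntegral_add_eq c 0
  simp only [add_sub_cancel_right, zero_add] at h1 h2
  rw [h1, add_comm T c, h2]

theorem intervalIntegrable_bdd_mul {u g : ℝ → ℝ} {a b M : ℝ} (hu : Measurable u)
    (hM : ∀ y, |u y| ≤ M) (hg : IntervalIntegrable g volume a b) :
    IntervalIntegrable (fun y => u y * g y) volume a b := by
  rw [intervalIntegrable_iff] at hg ⊢
  exact hg.bdd_mul hu.aestronglyMeasurable (Filter.Eventually.of_forall hM)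

/-- For `u` bounded measurable and `n`-periodic, and `ψ` `n`-periodic, integrable
on `[0,n]`, with `Σ_{i<n} ψ(y+i) = 0` a.e., one has `∫₀ⁿ (Σ_{i<n} u(y+i)) ψ(y) dy = 0`. -/
theorem periodic_sum_pairing_zero (n : ℕ) (hn : 2 ≤ n)
    (u ψ : ℝ → ℝ) (humeas : Measurable u) (hubd : ∃ M : ℝ, ∀ y, |u y| ≤ M)
    (huper : Function.Periodic u (n:ℝ))
    (hψper : Function.Periodic ψ (n:ℝ))
    (hψint : IntervalIntegrable ψ volume 0 (n:ℝ))
    (hψsum : ∀ᵐ y ∂volume, ∑ i ∈ Finset.range n, ψ (y + (i:ℝ)) = 0) :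
    ∫ y in (0:ℝ)..(n:ℝ), (∑ i ∈ Finset.range n, u (y + (i:ℝ))) * ψ y = 0 := by
  obtain ⟨M, hM⟩ := hubd
  have hn0 : (n:ℝ) ≠ 0 := by
    have : n ≠ 0 := by omega
    exact_mod_cast this
  have hsub : ∀ c : ℝ, IntervalIntegrable (fun y => ψ (y - c)) volume 0 (n:ℝ) := fun c => by
    have h := (hψper.intervalIntegrable₀ hn0 hψint (0 - c) (n - c)).comp_sub_right c
    simpa only [sub_add_cancel] using h
  have hleft : ∀ i ∈ Finset.range n,
      IntervalIntegrable (fun y => u (y + (i:ℝ)) * ψ y) volume 0 (n:ℝ) := fun i _ =>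
    intervalIntegrable_bdd_mul (humeas.comp (measurable_add_const (i:ℝ))) (fun y => hM _) hψint
  have hright : ∀ i ∈ Finset.range n,
      IntervalIntegrable (fun y => u y * ψ (y - (i:ℝ))) volume 0 (n:ℝ) := fun i _ =>
    intervalIntegrable_bdd_mul humeas hM (hsub i)
  have hzero : ∀ᵐ y ∂volume, ∑ i ∈ Finset.range n, ψ (y - (i:ℝ)) = 0 := by
    -- Translations preserve null sets, so the hypothesis can be used at `y - (n - 1)`.
    have h := (measurePreserving_sub_right volume ((n:ℝ) - 1)).quasiMeasurePreserving.ae hψsum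
    filter_upwards [h] with y hy
    rw [← hy, ← Finset.sum_range_reflect]
    refine Finset.sum_congr rfl fun i hi => ?_
    have hi' : i + 1 ≤ n := Finset.mem_range.mp hi
    rw [show n - 1 - i = n - (i + 1) by omega, Nat.cast_sub hi']
    congr 1
    push_cast
    ring
  simp_rw [Finset.sum_mul]
  rw [intervalIntegral.integral_finsetSum hleft,
    Finset.sum_congr rfl fun (i : ℕ) _ => integral_shift_mul huper hψper (i:ℝ),
    ← intervalIntegral.integral_finsetSum hright]
  refine intervalIntegral.integral_zero_ae ?_
  filter_upwards [hzero] with y hy _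
  rw [← Finset.mul_sum, hy, mul_zero]
end

section
/- Let n ≥ 2 be an integer, let h : ℝ → ℝ be measurable, periodic with period n, with m ≤ h(y) ≤ 1 for some m > 0, and define R_h(y) = −ln h(y) + (1/n) Σ_{i=0}^{n−1} ln h(y+i); assume R_h is not almost everywhere zero on [0,n]. Then for every ψ : ℝ → ℝ periodic with period n, square-integrable on [0,n], satisfying Σ_{i=0}^{n−1} ψ(y+i) = 0 for almost every y and ∫₀ⁿ ψ(y)² dy = 1, one has −∫₀ⁿ ln h(y) ψ(y) dy ≤ (∫₀ⁿ R_h(y)² dy)^{1/2}, with equality if and only if ψ = R_h · (∫₀ⁿ R_h(y)² dy)^{−1/2} almost everywhere on [0,n]. -/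
open MeasureTheory Set

/-!
Write `A y = (1/n) ∑_{i<n} ln h(y+i)`, so that `R = -ln h + A`. Since `h` is `n`-periodic, `A` is
`1`-periodic; cutting `[0,n]` into unit intervals therefore turns `∫₀ⁿ A ψ` into
`∫₀¹ A(y) ∑_{k<n} ψ(y+k) dy = 0` (`integral_mul_eq_zero_of_sum_shift_eq_zero`). Thus `R` is the
orthogonal projection of `-ln h` onto the tangent space, and `-∫ ln h ψ = ∫ R ψ`.

What remains is Cauchy–Schwarz with its equality case
(`integral_mul_le_sqrt_and_eq_iff`), read off from
`∫ (R - c ψ)² = 2 c (c - ∫ R ψ)`, where `c = (∫ R²)^{1/2} > 0` and `∫ ψ² = 1`.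
-/

/-- The sum of an `n`-periodic function over the shifts by `0, …, n-1` is `1`-periodic. -/
lemma periodic_one_sum_shift {L : ℝ → ℝ} {n : ℕ} (hL : Function.Periodic L (n : ℝ)) :
    Function.Periodic (fun y => ∑ i ∈ Finset.range n, L (y + (i : ℝ))) 1 := by
  intro y
  have h1 := Finset.sum_range_succ (fun i : ℕ => L (y + (i : ℝ))) n
  have h2 := Finset.sum_range_succ' (fun i : ℕ => L (y + (i : ℝ))) n
  have h3 : ∑ i ∈ Finset.range n, L (y + 1 + (i : ℝ))
      = ∑ i ∈ Finset.range n, L (y + ((i + 1 : ℕ) : ℝ)) := by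
    refine Finset.sum_congr rfl fun i _ => ?_
    congr 1
    push_cast
    ring
  have h4 : L (y + (n : ℝ)) = L y := hL y
  simp only [Nat.cast_zero, add_zero] at h2
  change ∑ i ∈ Finset.range n, L (y + 1 + (i : ℝ)) = ∑ i ∈ Finset.range n, L (y + (i : ℝ))
  linarith

/-- A `1`-periodic function is orthogonal on `[0,n]` to every function whose shifts by
`0, …, n-1` sum to zero. -/
lemma integral_mul_eq_zero_of_sum_shift_eq_zero {A ψ : ℝ → ℝ} {n : ℕ}
    (hA : Function.Periodic A 1)
    (hint : IntervalIntegrable (fun y => A y * ψ y) volume 0 (n : ℝ))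
    (hψ : ∀ᵐ y ∂volume, ∑ i ∈ Finset.range n, ψ (y + (i : ℝ)) = 0) :
    ∫ y in (0 : ℝ)..(n : ℝ), A y * ψ y = 0 := by
  have hk : ∀ k < n, IntervalIntegrable (fun y => A y * ψ y) volume
      ((k : ℕ) : ℝ) ((k + 1 : ℕ) : ℝ) := by
    intro k hk
    refine hint.mono_set ?_
    have h1 : ((k + 1 : ℕ) : ℝ) ≤ (n : ℝ) := by exact_mod_cast hk
    have h2 : (k : ℝ) ≤ ((k + 1 : ℕ) : ℝ) := by exact_mod_cast Nat.le_succ k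
    rw [uIcc_of_le h2, uIcc_of_le (Nat.cast_nonneg n)]
    exact Icc_subset_Icc (Nat.cast_nonneg k) h1
  have hAk : ∀ (k : ℕ) (y : ℝ), A (y + (k : ℝ)) = A y := fun k y => by
    simpa using hA.nat_mul k y
  have hshift : ∀ k < n, IntervalIntegrable (fun y => A y * ψ (y + (k : ℝ))) volume 0 1 := by
    intro k hkn
    have := (hk k hkn).comp_add_right (k : ℝ)
    simpa [hAk] using this
  have hsum := intervalIntegral.sum_integral_adjacent_intervals
    (f := fun y => A y * ψ y) (a := fun k : ℕ => (k : ℝ)) hk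
  simp only [Nat.cast_zero] at hsum
  rw [← hsum]
  have hpiece : ∀ k ∈ Finset.range n, ∫ y in ((k : ℕ) : ℝ)..((k + 1 : ℕ) : ℝ), A y * ψ y
      = ∫ y in (0 : ℝ)..1, A y * ψ (y + (k : ℝ)) := by
    intro k _
    have := intervalIntegral.integral_comp_add_right (a := 0) (b := 1)
      (fun y => A y * ψ y) (k : ℝ)
    simp only [hAk, zero_add] at this
    rw [this]
    congr 1
    push_cast
    ring
  rw [Finset.sum_congr rfl hpiece, ← intervalIntegral.integral_finsetSum
    fun k hkn => hshift k (Finset.mem_range.mp hkn)]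
  refine intervalIntegral.integral_zero_ae ?_
  filter_upwards [hψ] with y hy _
  rw [← Finset.mul_sum, hy, mul_zero]

/-- Cauchy–Schwarz against a unit vector of `L²(μ)`, with its equality case. -/
lemma integral_mul_le_sqrt_and_eq_iff {μ : Measure ℝ} {R ψ : ℝ → ℝ}
    (hR : MemLp R 2 μ) (hψ : MemLp ψ 2 μ) (hRne : ¬ ∀ᵐ y ∂μ, R y = 0)
    (hone : ∫ y, ψ y ^ 2 ∂μ = 1) :
    ∫ y, R y * ψ y ∂μ ≤ √(∫ y, R y ^ 2 ∂μ) ∧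
      (∫ y, R y * ψ y ∂μ = √(∫ y, R y ^ 2 ∂μ) ↔
        ∀ᵐ y ∂μ, ψ y = R y * (√(∫ y, R y ^ 2 ∂μ))⁻¹) := by
  have hR2 := hR.integrable_sq
  have hψ2 := hψ.integrable_sq
  have hRψ : Integrable (fun y => R y * ψ y) μ := hR.integrable_mul hψ
  have hnn : 0 ≤ ∫ y, R y ^ 2 ∂μ := integral_nonneg fun y => sq_nonneg _
  have hpos : 0 < ∫ y, R y ^ 2 ∂μ := by
    refine lt_of_le_of_ne hnn fun h0 => hRne ?_
    filter_upwards [(integral_eq_zero_iff_of_nonneg (fun y => sq_nonneg (R y)) hR2).1 h0.symm]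
      with y hy
    simpa using hy
  have hc : 0 < √(∫ y, R y ^ 2 ∂μ) := Real.sqrt_pos.2 hpos
  have hcsq := Real.sq_sqrt hnn
  set c := √(∫ y, R y ^ 2 ∂μ)
  have hdint : Integrable (fun y => (R y - c * ψ y) ^ 2) μ :=
    (hR.sub (hψ.const_mul c)).integrable_sq
  have hkey : ∫ y, (R y - c * ψ y) ^ 2 ∂μ = 2 * c * (c - ∫ y, R y * ψ y ∂μ) := by
    have : (fun y => (R y - c * ψ y) ^ 2)
        = fun y => (R y ^ 2 - 2 * c * (R y * ψ y)) + c ^ 2 * ψ y ^ 2 := by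
      funext y
      ring
    have hsub : Integrable (fun y => R y ^ 2 - 2 * c * (R y * ψ y)) μ :=
      hR2.sub (hRψ.const_mul _)
    rw [this, integral_add hsub (hψ2.const_mul _),
      integral_sub hR2 (hRψ.const_mul _), integral_const_mul, integral_const_mul, hone, ← hcsq]
    ring
  have hdnn : 0 ≤ ∫ y, (R y - c * ψ y) ^ 2 ∂μ := integral_nonneg fun y => sq_nonneg _
  refine ⟨?_, ?_⟩
  · rw [hkey] at hdnn
    have := nonneg_of_mul_nonneg_right hdnn (by positivity)
    linarith
  · have h1 : ∫ y, R y * ψ y ∂μ = c ↔ ∫ y, (R y - c * ψ y) ^ 2 ∂μ = 0 := by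
      rw [hkey, mul_eq_zero, or_iff_right (by positivity), sub_eq_zero, eq_comm]
    rw [h1, integral_eq_zero_iff_of_nonneg (fun y => sq_nonneg (R y - c * ψ y)) hdint]
    refine Filter.eventually_congr (Filter.Eventually.of_forall fun y => ?_)
    simp only [Pi.zero_apply, sq_eq_zero_iff, sub_eq_zero]
    rw [eq_mul_inv_iff_mul_eq₀ hc.ne', mul_comm (ψ y) c, eq_comm]

/-- The unit tangent direction maximizing the Gateaux derivative
`DH_h(ψ) = -∫₀ⁿ ln h ψ dy` of the SRB entropy is the normalized Riesz representation
`R_h / ‖R_h‖_{L²}`: for every admissible unit `ψ`, `-∫₀ⁿ ln h ψ ≤ (∫₀ⁿ R_h²)^{1/2}`, with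
equality iff `ψ = R_h (∫₀ⁿ R_h²)^{-1/2}` a.e. on `[0,n]`. -/
theorem srb_gradient_maximizing_direction (n : ℕ) (hn : 2 ≤ n) (m : ℝ) (hm : 0 < m)
    (h : ℝ → ℝ) (hmeas : Measurable h) (hper : Function.Periodic h (n:ℝ))
    (hbd : ∀ y, m ≤ h y ∧ h y ≤ 1)
    (R : ℝ → ℝ)
    (hR : ∀ y, R y = -Real.log (h y) +
      (1 / (n:ℝ)) * ∑ i ∈ Finset.range n, Real.log (h (y + (i:ℝ))))
    (hRne : ¬ (∀ᵐ y ∂(volume.restrict (Icc (0:ℝ) (n:ℝ))), R y = 0)) :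
    ∀ ψ : ℝ → ℝ, Function.Periodic ψ (n:ℝ) → Measurable ψ →
      IntervalIntegrable (fun y => (ψ y) ^ 2) volume 0 (n:ℝ) →
      (∀ᵐ y ∂volume, ∑ i ∈ Finset.range n, ψ (y + (i:ℝ)) = 0) →
      (∫ y in (0:ℝ)..(n:ℝ), (ψ y) ^ 2) = 1 →
      (-∫ y in (0:ℝ)..(n:ℝ), Real.log (h y) * ψ y) ≤
          Real.sqrt (∫ y in (0:ℝ)..(n:ℝ), (R y) ^ 2) ∧
        ((-∫ y in (0:ℝ)..(n:ℝ), Real.log (h y) * ψ y) =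
            Real.sqrt (∫ y in (0:ℝ)..(n:ℝ), (R y) ^ 2) ↔
          ∀ᵐ y ∂(volume.restrict (Icc (0:ℝ) (n:ℝ))),
            ψ y = R y * (Real.sqrt (∫ y in (0:ℝ)..(n:ℝ), (R y) ^ 2))⁻¹) := by
  intro ψ _ hψm hψsq hψsum hψone
  have hn0 : (0 : ℝ) ≤ (n : ℝ) := Nat.cast_nonneg n
  have hlogm : Measurable fun y => Real.log (h y) := Real.measurable_log.comp hmeas
  have hlogper : Function.Periodic (fun y => Real.log (h y)) (n : ℝ) := fun y => by
    simp only [hper y]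
  have hlogbd : ∀ y, ‖Real.log (h y)‖ ≤ -Real.log m := fun y => by
    rw [Real.norm_eq_abs, abs_of_nonpos (Real.log_nonpos (hm.le.trans (hbd y).1) (hbd y).2)]
    exact neg_le_neg (Real.log_le_log hm (hbd y).1)
  have hlog2 : MemLp (fun y => Real.log (h y)) 2 (volume.restrict (Ioc (0 : ℝ) n)) :=
    MemLp.of_bound hlogm.aestronglyMeasurable _ (Filter.Eventually.of_forall hlogbd)
  have hA2 : MemLp (fun y => (1 / (n : ℝ)) * ∑ i ∈ Finset.range n, Real.log (h (y + (i : ℝ)))) 2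
      (volume.restrict (Ioc (0 : ℝ) n)) := by
    have hsum : MemLp (fun y => ∑ i ∈ Finset.range n, Real.log (h (y + (i : ℝ)))) 2
        (volume.restrict (Ioc (0 : ℝ) n)) := by
      refine memLp_finsetSum (f := fun (i : ℕ) y => Real.log (h (y + (i : ℝ)))) _ fun i _ => ?_
      exact MemLp.of_bound (hlogm.comp (measurable_id.add_const (i : ℝ))).aestronglyMeasurable _
        (Filter.Eventually.of_forall fun y => hlogbd (y + (i : ℝ)))
    exact hsum.const_mul _
  have hRfun : R = fun y => -Real.log (h y) +
      (1 / (n : ℝ)) * ∑ i ∈ Finset.range n, Real.log (h (y + (i : ℝ))) := funext hR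
  have hR2 : MemLp R 2 (volume.restrict (Ioc (0 : ℝ) n)) := by
    rw [hRfun]
    exact hlog2.neg.add hA2
  have hψ2 : MemLp ψ 2 (volume.restrict (Ioc (0 : ℝ) n)) :=
    (memLp_two_iff_integrable_sq hψm.aestronglyMeasurable).2
      ((intervalIntegrable_iff_integrableOn_Ioc_of_le hn0).1 hψsq)
  have hlogψ : IntervalIntegrable (fun y => Real.log (h y) * ψ y) volume 0 (n : ℝ) :=
    (intervalIntegrable_iff_integrableOn_Ioc_of_le hn0).2 (hlog2.integrable_mul hψ2)
  have hAψ : IntervalIntegrable (fun y => ((1 / (n : ℝ)) *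
      ∑ i ∈ Finset.range n, Real.log (h (y + (i : ℝ)))) * ψ y) volume 0 (n : ℝ) :=
    (intervalIntegrable_iff_integrableOn_Ioc_of_le hn0).2 (hA2.integrable_mul hψ2)
  have hAper : Function.Periodic
      (fun y => (1 / (n : ℝ)) * ∑ i ∈ Finset.range n, Real.log (h (y + (i : ℝ)))) 1 := fun y =>
    congrArg (fun t => (1 / (n : ℝ)) * t) (periodic_one_sum_shift hlogper y)
  have hproj : -∫ y in (0 : ℝ)..(n : ℝ), Real.log (h y) * ψ y
      = ∫ y in (0 : ℝ)..(n : ℝ), R y * ψ y := by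
    simp only [hR, add_mul, neg_mul]
    have hneg : IntervalIntegrable (fun y => -(Real.log (h y) * ψ y)) volume 0 (n : ℝ) :=
      hlogψ.neg
    rw [intervalIntegral.integral_add hneg hAψ, intervalIntegral.integral_neg,
      integral_mul_eq_zero_of_sum_shift_eq_zero hAper hAψ hψsum, add_zero]
  rw [hproj]
  rw [← restrict_Ioc_eq_restrict_Icc] at hRne ⊢
  simp only [intervalIntegral.integral_of_le hn0] at hψone ⊢
  exact integral_mul_le_sqrt_and_eq_iff hR2 hψ2 hRne hψone
end

section
/- Let n ≥ 2 be an integer and let h : ℝ → ℝ be periodic with period n, with h(y) > 0 for all y, satisfying Σ_{i=0}^{n−1} h(y+i) = 1 for all y. If ln h(y) = (1/n) Σ_{i=0}^{n−1} ln h(y+i) for all y, then h(y) = 1/n for all y. -/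
/-!
Shifting `y` by one changes the sum `∑ i < n, log (h (y + i))` only by swapping the term
`log (h y)` for `log (h (y + n))`, and these agree by periodicity. A critical `h` is therefore
1-periodic, and the normalization `∑ i < n, h (y + i) = 1` becomes `n * h y = 1`.
-/

/-- If `h` is `n`-periodic, positive, satisfies `Σ_{i<n} h(y+i) = 1` for all `y`,
and the gradient of the SRB entropy vanishes, i.e.
`ln h(y) = (1/n) Σ_{i<n} ln h(y+i)` for all `y`, then `h ≡ 1/n`. -/
theorem srb_gradient_unique_zero (n : ℕ) (hn : 2 ≤ n) (h : ℝ → ℝ)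
    (hper : Function.Periodic h (n:ℝ)) (hpos : ∀ y, 0 < h y)
    (hsum : ∀ y, ∑ i ∈ Finset.range n, h (y + (i:ℝ)) = 1)
    (hcrit : ∀ y, Real.log (h y) =
      (1 / (n:ℝ)) * ∑ i ∈ Finset.range n, Real.log (h (y + (i:ℝ)))) :
    ∀ y, h y = 1 / (n:ℝ) := by
  have hn0 : (n : ℝ) ≠ 0 := by positivity
  have h_one : Function.Periodic h 1 := by
    intro y
    apply Real.log_injOn_pos (hpos _) (hpos _)
    rw [hcrit (y + 1), hcrit y]
    congr 1
    have h1 := Finset.sum_range_succ (fun i : ℕ => Real.log (h (y + (i : ℝ)))) n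
    have h2 := Finset.sum_range_succ' (fun i : ℕ => Real.log (h (y + (i : ℝ)))) n
    have h3 : ∀ i : ℕ, y + 1 + (i : ℝ) = y + ((i + 1 : ℕ) : ℝ) := by
      intro i
      push_cast
      ring
    simp only [h3]
    simp only [hper y, Nat.cast_zero, add_zero] at h1 h2
    linarith
  intro y
  have h_eq : ∀ i : ℕ, h (y + (i : ℝ)) = h y := fun i => by
    simpa using h_one.nat_mul i y
  have hs := hsum y
  simp only [h_eq, Finset.sum_const, Finset.card_range, nsmul_eq_mul] at hs
  field_simp
  linarith
end

section
/- Let n ≥ 2 be an integer and let g : [0,n] → ℝ be continuously differentiable with g(0) = 0, g(n) = 1, 0 < g'(y) < 1 for all y, g'(0) = g'(n), and, extending g' periodically with period n, Σ_{i=0}^{n−1} g'(y+i) = 1 for all y ∈ [0,1]. Suppose that ∫₀ⁿ ln g'(y) · φ'(y) dy = 0 for every continuously differentiable φ : ℝ → ℝ with φ(0) = 0 whose derivative φ' is periodic with period n and satisfies Σ_{i=0}^{n−1} φ'(y+i) = 0 for all y. Then g(y) = y/n for all y ∈ [0,n]. -/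
/-!
Since `log` is increasing, `(log g' - log (1/n)) * (g' - 1/n)` is nonnegative and vanishes only
where `g' = 1/n`. The `n`-periodic extension `G` of `g'` makes `φ' = G - 1/n` an admissible
direction: its sum over a fibre is `1 - n * (1/n) = 0`. Criticality in this direction says
`∫ log g' * (g' - 1/n) = 0`, and `∫ (g' - 1/n) = g n - g 0 - 1 = 0`, so the nonnegative continuous
function above has zero integral over `[0, n]`. Hence `g' = 1/n` there, and integrating gives
`g y = y / n`.
-/

open MeasureTheory Set

/-- A sum of an `n`-periodic function over `n` consecutive unit translates is `1`-periodic: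
the shift only replaces the term `i = 0` by the term `i = n`. -/
lemma periodic_fibre_sum (n : ℕ) (G : ℝ → ℝ) (hG : Function.Periodic G (n : ℝ)) :
    Function.Periodic (fun y : ℝ => ∑ i ∈ Finset.range n, G (y + (i : ℝ))) 1 := by
  intro y
  have h1 := Finset.sum_range_succ (fun i : ℕ => G (y + (i : ℝ))) n
  have h2 := Finset.sum_range_succ' (fun i : ℕ => G (y + (i : ℝ))) n
  have h3 := hG y
  simp only [Nat.cast_zero, add_zero, Nat.cast_add, Nat.cast_one] at h1 h2
  have h4 : ∀ i : ℕ, y + 1 + (i : ℝ) = y + ((i : ℝ) + 1) := fun i => by ring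
  simp only [h4]
  linarith

lemma exists_periodic_extension (n : ℕ) (hn : 0 < n) (f : ℝ → ℝ)
    (hf : ContinuousOn f (Icc (0 : ℝ) (n : ℝ))) (hper : f 0 = f (n : ℝ)) :
    ∃ G : ℝ → ℝ, Continuous G ∧ Function.Periodic G (n : ℝ) ∧
      ∀ y ∈ Icc (0 : ℝ) (n : ℝ), G y = f y := by
  have : Fact ((0 : ℝ) < (n : ℝ)) := ⟨by exact_mod_cast hn⟩
  have hn0 : (0 : ℝ) < n := Fact.out
  have hP : Function.Periodic (fun y : ℝ => AddCircle.liftIco (n : ℝ) 0 f (y : AddCircle (n : ℝ)))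
      (n : ℝ) := by
    intro y
    simp
  have hI : ∀ y ∈ Ico (0 : ℝ) (n : ℝ),
      AddCircle.liftIco (n : ℝ) 0 f (y : AddCircle (n : ℝ)) = f y := fun y hy =>
    AddCircle.liftIco_coe_apply (by simpa using hy)
  refine ⟨fun y => AddCircle.liftIco (n : ℝ) 0 f (y : AddCircle (n : ℝ)), ?_, hP, ?_⟩
  · exact (AddCircle.liftIco_continuous (by simpa using hper) (by simpa using hf)).comp
      (AddCircle.continuous_mk' _)
  · intro y hy
    rcases hy.2.lt_or_eq with h | h
    · exact hI y ⟨hy.1, h⟩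
    · subst h
      have h0 := hP 0
      rw [zero_add] at h0
      exact h0.trans ((hI 0 ⟨le_rfl, hn0⟩).trans hper)

/-- If `g` (the inverse of the lift of a Lebesgue-measure-preserving degree-`n`
expanding circle map) is a critical point of the SRB entropy functional, i.e.
`∫₀ⁿ ln g'(y) φ'(y) dy = 0` for every admissible tangent direction `φ`, then `g(y) = y/n`. -/
theorem srb_entropy_critical_point_linear (n : ℕ) (hn : 2 ≤ n)
    (g g' : ℝ → ℝ)
    (hg : ∀ y ∈ Icc (0:ℝ) (n:ℝ), HasDerivWithinAt g (g' y) (Icc (0:ℝ) (n:ℝ)) y)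
    (hg'cont : ContinuousOn g' (Icc (0:ℝ) (n:ℝ)))
    (hg0 : g 0 = 0) (hgn : g (n:ℝ) = 1)
    (hg'bd : ∀ y ∈ Icc (0:ℝ) (n:ℝ), 0 < g' y ∧ g' y < 1)
    (hg'per : g' 0 = g' (n:ℝ))
    (hsum : ∀ y ∈ Icc (0:ℝ) 1, ∑ i ∈ Finset.range n, g' (y + (i:ℝ)) = 1)
    (hcrit : ∀ φ φ' : ℝ → ℝ,
      (∀ y : ℝ, HasDerivAt φ (φ' y) y) → Continuous φ' → φ 0 = 0 →
      Function.Periodic φ' (n:ℝ) →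
      (∀ y : ℝ, ∑ i ∈ Finset.range n, φ' (y + (i:ℝ)) = 0) →
      ∫ y in (0:ℝ)..(n:ℝ), Real.log (g' y) * φ' y = 0) :
    ∀ y ∈ Icc (0:ℝ) (n:ℝ), g y = y / (n:ℝ) := by
  have hn0 : (0 : ℝ) < n := by exact_mod_cast (by omega : 0 < n)
  obtain ⟨G, hGc, hGp, hGe⟩ := exists_periodic_extension n (by omega) g' hg'cont hg'per
  have hGsum : ∀ y : ℝ, ∑ i ∈ Finset.range n, G (y + (i : ℝ)) = 1 := by
    intro y
    obtain ⟨z, hz, hyz⟩ := (periodic_fibre_sum n G hGp).exists_mem_Ico₀ one_pos y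
    refine hyz.trans ?_
    rw [← hsum z ⟨hz.1, hz.2.le⟩]
    refine Finset.sum_congr rfl fun i hi => hGe _ ⟨by have := hz.1; positivity, ?_⟩
    have : ((i : ℝ) + 1) ≤ n := by exact_mod_cast Finset.mem_range.mp hi
    linarith [hz.2]
  have hφc : Continuous (fun y => G y - 1 / (n : ℝ)) := hGc.sub continuous_const
  have hcr := hcrit (fun y => ∫ t in (0 : ℝ)..y, (G t - 1 / (n : ℝ))) (fun y => G y - 1 / (n : ℝ))
    (fun y => (hφc.integral_hasStrictDerivAt 0 y).hasDerivAt) hφc (by simp)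
    (fun y => by simp only [hGp y])
    (fun y => by
      rw [Finset.sum_sub_distrib, hGsum]
      simp [hn0.ne'])
  have hftc : ∀ y ∈ Icc (0 : ℝ) (n : ℝ), ∫ t in (0 : ℝ)..y, G t = g y := by
    intro y hy
    have := intervalIntegral.integral_eq_sub_of_hasDerivAt_of_le hy.1 (f := g) (f' := G)
      (fun x hx => ((hg x ⟨hx.1, hx.2.trans hy.2⟩).continuousWithinAt).mono
        (Icc_subset_Icc_right hy.2))
      (fun x hx => by
        have hx' : x ∈ Ioo (0 : ℝ) n := ⟨hx.1, hx.2.trans_le hy.2⟩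
        rw [hGe x (Ioo_subset_Icc_self hx')]
        exact (hg x (Ioo_subset_Icc_self hx')).hasDerivAt (Icc_mem_nhds hx'.1 hx'.2))
      (hGc.intervalIntegrable _ _)
    rw [this, hg0, sub_zero]
  have hmean : ∫ t in (0 : ℝ)..n, (G t - 1 / (n : ℝ)) = 0 := by
    rw [intervalIntegral.integral_sub (hGc.intervalIntegrable _ _)
      intervalIntegrable_const, hftc n ⟨hn0.le, le_rfl⟩, hgn]
    simp [hn0.ne']
  have hlogc : ContinuousOn (fun y => Real.log (g' y)) (Icc (0 : ℝ) n) :=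
    hg'cont.log fun y hy => (hg'bd y hy).1.ne'
  have hFc : ContinuousOn (fun y => (Real.log (g' y) - Real.log (1 / (n : ℝ))) *
      (G y - 1 / (n : ℝ))) (Icc (0 : ℝ) n) :=
    (hlogc.sub continuousOn_const).mul hφc.continuousOn
  have hFint : ∫ y in (0 : ℝ)..n, (Real.log (g' y) - Real.log (1 / (n : ℝ))) *
      (G y - 1 / (n : ℝ)) = 0 := by
    have hi : IntervalIntegrable (fun y => Real.log (g' y) * (G y - 1 / (n : ℝ))) volume 0 n :=
      (hlogc.mul hφc.continuousOn).intervalIntegrable_of_Icc hn0.le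
    simp only [sub_mul (Real.log _)]
    rw [intervalIntegral.integral_sub hi
      ((hφc.const_mul _).intervalIntegrable _ _), hcr,
      intervalIntegral.integral_const_mul, hmean]
    simp
  have hinv : (0 : ℝ) < 1 / n := by positivity
  have hFpos : ∀ y ∈ Icc (0 : ℝ) (n : ℝ), G y ≠ 1 / (n : ℝ) →
      0 < (Real.log (g' y) - Real.log (1 / (n : ℝ))) * (G y - 1 / (n : ℝ)) := by
    intro y hy hne
    rw [hGe y hy] at hne ⊢
    rcases hne.lt_or_gt with h | h
    · exact mul_pos_of_neg_of_neg (sub_neg.2 (Real.log_lt_log (hg'bd y hy).1 h)) (sub_neg.2 h)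
    · exact mul_pos (sub_pos.2 (Real.log_lt_log hinv h)) (sub_pos.2 h)
  have hGconst : ∀ y ∈ Icc (0 : ℝ) (n : ℝ), G y = 1 / (n : ℝ) := by
    by_contra! hcon
    obtain ⟨c, hc, hne⟩ := hcon
    refine (intervalIntegral.integral_pos hn0 hFc (fun y hy => ?_)
      ⟨c, hc, hFpos c hc hne⟩).ne' hFint
    by_cases h : G y = 1 / (n : ℝ)
    · simp [h]
    · exact (hFpos y (Ioc_subset_Icc_self hy) h).le
  intro y hy
  rw [← hftc y hy, intervalIntegral.integral_congr (g := fun _ => 1 / (n : ℝ))]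
  · simp [div_eq_mul_inv]
  · intro x hx
    rw [uIcc_of_le hy.1] at hx
    exact hGconst x ⟨hx.1, hx.2.trans hy.2⟩
end

section
/- Let n ≥ 2 be an integer and let x : [0,∞) → ℝⁿ be differentiable with x_k(t) > 0 for all k and all t ≥ 0, satisfying x_k'(t) = −ln x_k(t) + (1/n) Σ_{i=1}^{n} ln x_i(t) for k = 1,…,n. Then for every pair of indices j, k, the function t ↦ (x_j(t) − x_k(t))² is nonincreasing on [0,∞). -/
/-!
The mean of the logarithms is common to all coordinates, so it cancels in a difference, and
`(x_j - x_k)²` has derivative `-2 (x_j - x_k) (ln x_j - ln x_k)`. This is nonpositive because `ln`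
is increasing on the positive reals, and a function with nonpositive derivative on an interval is
antitone.
-/

/-- Along the gradient-flow ODE system `x_k' = -ln x_k + (1/n) Σ_i ln x_i`
with `x_k(t) > 0`, each squared difference `(x_j(t) - x_k(t))²` is nonincreasing on `[0,∞)`. -/
theorem srb_gradient_flow_sq_diff_antitone (n : ℕ) (hn : 2 ≤ n)
    (x : ℝ → Fin n → ℝ)
    (hpos : ∀ t ≥ (0:ℝ), ∀ k, 0 < x t k)
    (hode : ∀ t ≥ (0:ℝ), ∀ k, HasDerivWithinAt (fun s => x s k)
      (-Real.log (x t k) + (1 / (n:ℝ)) * ∑ i, Real.log (x t i)) (Set.Ici (0:ℝ)) t) :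
    ∀ j k : Fin n, AntitoneOn (fun t => (x t j - x t k) ^ 2) (Set.Ici (0:ℝ)) := by
  intro j k
  have hd : ∀ t ≥ (0:ℝ), HasDerivWithinAt (fun s => (x s j - x s k) ^ 2)
      (-2 * ((x t j - x t k) * (Real.log (x t j) - Real.log (x t k)))) (Set.Ici 0) t := by
    intro t ht
    refine (((hode t ht j).fun_sub (hode t ht k)).fun_pow 2).congr_deriv ?_
    push_cast
    ring
  refine antitoneOn_of_hasDerivWithinAt_nonpos (convex_Ici 0)
    (fun t ht => (hd t ht).continuousWithinAt)
    (fun t ht => (hd t (interior_subset ht)).mono interior_subset) fun t ht => ?_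
  have ht0 : 0 ≤ t := interior_subset ht
  have hj := hpos t ht0 j
  have hk := hpos t ht0 k
  have hsign : 0 ≤ (x t j - x t k) * (Real.log (x t j) - Real.log (x t k)) := by
    rcases le_total (x t j) (x t k) with h | h
    · exact mul_nonneg_of_nonpos_of_nonpos (sub_nonpos.2 h)
        (sub_nonpos.2 (Real.log_le_log hj h))
    · exact mul_nonneg (sub_nonneg.2 h) (sub_nonneg.2 (Real.log_le_log hk h))
  linarith
end

section
/- Let n ≥ 2 be an integer and let x : [0,∞) → ℝⁿ be differentiable with 0 < x_k(t) < 1 for all k and all t ≥ 0 and Σ_{k=1}^{n} x_k(t) = 1 for all t ≥ 0, satisfying x_k'(t) = −ln x_k(t) + (1/n) Σ_{i=1}^{n} ln x_i(t) for k = 1,…,n. Then for every k, x_k(t) → 1/n as t → ∞. -/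
/-!
The squared distance to the equilibrium, `V t = ∑ k, (x t k - 1/n)^2`, is a Lyapunov function that
decays exponentially. The deviations `x t k - 1/n` sum to zero, so constants independent of `k` may
be added to the velocity, and
`V' = -2 ∑ k, (x k - 1/n) (log (x k) - log (1/n))`.
Since `log` has slope at least `1` on `(0, 1]` (`sq_sub_le_mul_log_sub_log`), this gives `V' ≤ -2 V`.
Hence `exp (2 t) * V t` is nonincreasing, and `V t ≤ V 0 * exp (-2 t)` tends to zero.
-/

theorem sq_sub_le_mul_log_sub_log_of_le {a b : ℝ} (hb : 0 < b) (hba : b ≤ a) (ha1 : a ≤ 1) :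
    (a - b) ^ 2 ≤ (a - b) * (Real.log a - Real.log b) := by
  have ha : 0 < a := hb.trans_le hba
  have h1 := Real.log_le_sub_one_of_pos (div_pos hb ha)
  rw [Real.log_div hb.ne' ha.ne'] at h1
  have h2 : a - b ≤ 1 - b / a := by
    rw [one_sub_div ha.ne', le_div_iff₀ ha]
    nlinarith
  rw [sq]
  exact mul_le_mul_of_nonneg_left (by linarith) (by linarith)

/-- Strong monotonicity of `log` on `(0, 1]`, where its derivative is at least `1`. -/
theorem sq_sub_le_mul_log_sub_log {a b : ℝ} (ha : 0 < a) (hb : 0 < b) (ha1 : a ≤ 1) (hb1 : b ≤ 1) :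
    (a - b) ^ 2 ≤ (a - b) * (Real.log a - Real.log b) := by
  rcases le_total b a with h | h
  · exact sq_sub_le_mul_log_sub_log_of_le hb h ha1
  · linarith [sq_sub_le_mul_log_sub_log_of_le ha h hb1]

/-- Differential Gronwall inequality: `V' ≤ -2 V` on `[0, ∞)` forces exponential decay. -/
theorem le_mul_exp_of_hasDerivWithinAt_le {V V' : ℝ → ℝ}
    (hV : ∀ t ≥ (0:ℝ), HasDerivWithinAt V (V' t) (Set.Ici 0) t)
    (hV' : ∀ t ≥ (0:ℝ), V' t ≤ -2 * V t) {t : ℝ} (ht : 0 ≤ t) :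
    V t ≤ V 0 * Real.exp (-2 * t) := by
  have hd : ∀ s ≥ (0:ℝ), HasDerivWithinAt (fun s => Real.exp (2 * s) * V s)
      (Real.exp (2 * s) * 2 * V s + Real.exp (2 * s) * V' s) (Set.Ici 0) s := by
    intro s hs
    have h : HasDerivAt (fun s : ℝ => Real.exp (2 * s)) (Real.exp (2 * s) * 2) s := by
      simpa using ((hasDerivAt_id s).const_mul 2).exp
    exact h.hasDerivWithinAt.mul (hV s hs)
  have hanti : AntitoneOn (fun s => Real.exp (2 * s) * V s) (Set.Ici 0) := by
    refine antitoneOn_of_hasDerivWithinAt_nonpos (convex_Ici 0)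
      (fun s hs => (hd s hs).continuousWithinAt)
      (fun s hs => (hd s (interior_subset hs)).mono interior_subset) ?_
    intro s hs
    have := mul_le_mul_of_nonneg_left (hV' s (interior_subset hs)) (Real.exp_pos (2 * s)).le
    linarith
  have h0 := hanti (Set.mem_Ici.2 le_rfl) ht ht
  simp only [mul_zero, Real.exp_zero, one_mul] at h0
  have he : Real.exp (2 * t) * Real.exp (-2 * t) = 1 := by
    rw [← Real.exp_add]; simp
  calc V t = Real.exp (2 * t) * V t * Real.exp (-2 * t) := by linear_combination -V t * he
    _ ≤ V 0 * Real.exp (-2 * t) := mul_le_mul_of_nonneg_right h0 (Real.exp_pos _).le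

/-- Every trajectory of the gradient-flow ODE system
`x_k' = -ln x_k + (1/n) Σ_i ln x_i` staying in the open simplex
`{0 < x_k < 1, Σ x_k = 1}` converges to the equilibrium `x_k = 1/n` as `t → ∞`. -/
theorem srb_gradient_flow_converges (n : ℕ) (hn : 2 ≤ n)
    (x : ℝ → Fin n → ℝ)
    (hbd : ∀ t ≥ (0:ℝ), ∀ k, 0 < x t k ∧ x t k < 1)
    (hsum : ∀ t ≥ (0:ℝ), ∑ k, x t k = 1)
    (hode : ∀ t ≥ (0:ℝ), ∀ k, HasDerivWithinAt (fun s => x s k)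
      (-Real.log (x t k) + (1 / (n:ℝ)) * ∑ i, Real.log (x t i)) (Set.Ici (0:ℝ)) t) :
    ∀ k, Filter.Tendsto (fun t => x t k) Filter.atTop (nhds (1 / (n:ℝ))) := by
  have hn2 : (2:ℝ) ≤ n := by exact_mod_cast hn
  have hn0 : (0:ℝ) < n := by linarith
  have hb : 0 < 1 / (n:ℝ) := by positivity
  have hb1 : 1 / (n:ℝ) ≤ 1 := by rw [div_le_one hn0]; linarith
  set V : ℝ → ℝ := fun t => ∑ k, (x t k - 1 / (n:ℝ)) ^ 2 with hVdef
  have hder : ∀ t ≥ (0:ℝ), HasDerivWithinAt V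
      (∑ k, 2 * (x t k - 1 / (n:ℝ)) *
        (-Real.log (x t k) + (1 / (n:ℝ)) * ∑ i, Real.log (x t i))) (Set.Ici 0) t := by
    intro t ht
    refine HasDerivWithinAt.fun_sum fun k _ => ?_
    simpa using ((hode t ht k).sub_const (1 / (n:ℝ))).fun_pow 2
  have hle : ∀ t ≥ (0:ℝ), (∑ k, 2 * (x t k - 1 / (n:ℝ)) *
        (-Real.log (x t k) + (1 / (n:ℝ)) * ∑ i, Real.log (x t i))) ≤ -2 * V t := by
    intro t ht
    have hdev : ∑ k, (x t k - 1 / (n:ℝ)) = 0 := by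
      rw [Finset.sum_sub_distrib, hsum t ht]
      simp [hn0.ne']
    set m := (1 / (n:ℝ)) * ∑ i, Real.log (x t i)
    have hsplit : ∑ k, 2 * (x t k - 1 / (n:ℝ)) * (-Real.log (x t k) + m)
        = -2 * ∑ k, (x t k - 1 / (n:ℝ)) * (Real.log (x t k) - Real.log (1 / (n:ℝ)))
          + 2 * (m - Real.log (1 / (n:ℝ))) * ∑ k, (x t k - 1 / (n:ℝ)) := by
      rw [Finset.mul_sum, Finset.mul_sum, ← Finset.sum_add_distrib]
      exact Finset.sum_congr rfl fun k _ => by ring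
    have hmono : V t ≤
        ∑ k, (x t k - 1 / (n:ℝ)) * (Real.log (x t k) - Real.log (1 / (n:ℝ))) :=
      Finset.sum_le_sum fun k _ =>
        sq_sub_le_mul_log_sub_log (hbd t ht k).1 hb (hbd t ht k).2.le hb1
    rw [hsplit, hdev]
    linarith
  have hlim : Filter.Tendsto (fun t : ℝ => V 0 * Real.exp (-2 * t)) Filter.atTop (nhds 0) := by
    have h : Filter.Tendsto (fun t : ℝ => -2 * t) Filter.atTop Filter.atBot :=
      Filter.tendsto_id.const_mul_atTop_of_neg (by norm_num)
    simpa using (Real.tendsto_exp_atBot.comp h).const_mul (V 0)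
  intro k
  have hsq : Filter.Tendsto (fun t => (x t k - 1 / (n:ℝ)) ^ 2) Filter.atTop (nhds 0) := by
    refine squeeze_zero' (Filter.Eventually.of_forall fun t => sq_nonneg _) ?_ hlim
    filter_upwards [Filter.eventually_ge_atTop (0:ℝ)] with t ht
    exact (Finset.single_le_sum (f := fun k => (x t k - 1 / (n:ℝ)) ^ 2)
      (fun i _ => sq_nonneg _) (Finset.mem_univ k)).trans
      (le_mul_exp_of_hasDerivWithinAt_le hder hle ht)
  have habs : Filter.Tendsto (fun t => |x t k - 1 / (n:ℝ)|) Filter.atTop (nhds 0) := by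
    simpa [Real.sqrt_sq_eq_abs] using hsq.sqrt
  exact tendsto_sub_nhds_zero_iff.1 ((tendsto_zero_iff_abs_tendsto_zero _).2 habs)
end

section
/- Let n ≥ 2 be an integer and let x⁰ ∈ ℝⁿ satisfy 0 < x⁰_k < 1 for all k and Σ_{k=1}^{n} x⁰_k = 1. Then there exists a differentiable function x : [0,∞) → ℝⁿ with x(0) = x⁰ such that for all t ≥ 0 and all k: x_k'(t) = −ln x_k(t) + (1/n) Σ_{i=1}^{n} ln x_i(t), 0 < x_k(t) < 1, and Σ_{k=1}^{n} x_k(t) = 1. -/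
/-!
The smallest coordinate never decreases along the flow: when `x_k` is the smallest coordinate,
`-ln x_k + (1/n) Σ ln x_i ≥ 0`. So solutions should stay in the compact set
`{δ ≤ x_k ≤ 1}`, where `δ = min_k x⁰_k > 0`, and there the vector field is bounded and Lipschitz.

Accordingly the logarithm is replaced by `clampLog δ`, which agrees with it on `[δ, 1]` and is
constant outside, hence globally bounded and Lipschitz. The modified system `entropyField` then
has a solution on `[0, ∞)` (`exists_global_solution`: Picard–Lindelöf on each `[0, N]`, glued by
uniqueness). A barrier argument (`nonneg_of_deriv_nonneg_of_neg`) shows that this solution keeps all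
its coordinates above `δ`, and the coordinate sum is conserved because the components of the
field add up to zero. Hence all coordinates lie in `[δ, 1]`, in fact in `(0, 1)`, and the solution
solves the original system.
-/

/-- An autonomous ODE with a bounded, globally Lipschitz vector field has forward solutions for
all time. -/
lemma exists_global_solution {E : Type*} [NormedAddCommGroup E] [NormedSpace ℝ E]
    [CompleteSpace E] {v : E → E} {K L : NNReal} (hK : LipschitzWith K v)
    (hL : ∀ x, ‖v x‖ ≤ L) (x₀ : E) :
    ∃ x : ℝ → E, x 0 = x₀ ∧
      ∀ t ≥ (0 : ℝ), HasDerivWithinAt x (v (x t)) (Set.Ici (0 : ℝ)) t := by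
  have hex : ∀ N : ℕ, ∃ α : ℝ → E, α 0 = x₀ ∧
      ∀ t ∈ Set.Icc (0 : ℝ) N, HasDerivWithinAt α (v (α t)) (Set.Icc (0 : ℝ) N) t := by
    intro N
    -- The radius `L * N` is the farthest a solution can travel in time `N`.
    have hp : IsPicardLindelof (fun _ : ℝ => v) (tmin := 0) (tmax := N)
        ⟨0, le_rfl, N.cast_nonneg⟩ x₀ (L * N) 0 L K :=
      IsPicardLindelof.of_time_independent (fun x _ => hL x) hK.lipschitzOnWith (by simp)
    exact hp.exists_eq_forall_mem_Icc_hasDerivWithinAt₀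
  choose α hα0 hα using hex
  have hright : ∀ (M N : ℕ), M ≤ N → ∀ t ∈ Set.Ico (0 : ℝ) M,
      HasDerivWithinAt (α N) (v (α N t)) (Set.Ici t) t := by
    intro M N hMN t ht
    have hMN' : (M : ℝ) ≤ N := by exact_mod_cast hMN
    have htN : t < N := ht.2.trans_le hMN'
    exact (hα N t ⟨ht.1, htN.le⟩).mono_of_mem_nhdsWithin
      (Filter.mem_of_superset (Icc_mem_nhdsGE htN) (Set.Icc_subset_Icc_left ht.1))
  have hagree : ∀ M N : ℕ, M ≤ N → Set.EqOn (α M) (α N) (Set.Icc (0 : ℝ) M) := by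
    intro M N hMN
    have hMN' : (M : ℝ) ≤ N := by exact_mod_cast hMN
    exact ODE_solution_unique_of_mem_Icc_right (v := fun _ => v) (s := fun _ => Set.univ)
      (K := K) (fun _ _ => hK.lipschitzOnWith)
      (fun t ht => (hα M t ht).continuousWithinAt) (hright M M le_rfl) (fun _ _ => trivial)
      (fun t ht => (hα N t ⟨ht.1, ht.2.trans hMN'⟩).continuousWithinAt.mono
        (Set.Icc_subset_Icc_right hMN')) (hright M N hMN) (fun _ _ => trivial)
      ((hα0 M).trans (hα0 N).symm)
  have hx : ∀ (N : ℕ), ∀ t ∈ Set.Icc (0 : ℝ) N, α (⌊t⌋₊ + 1) t = α N t := by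
    intro N t ht
    rcases le_total (⌊t⌋₊ + 1) N with h | h
    · exact hagree _ _ h ⟨ht.1, by exact_mod_cast (Nat.lt_floor_add_one t).le⟩
    · exact (hagree _ _ h ht).symm
  refine ⟨fun t => α (⌊t⌋₊ + 1) t, hα0 _, fun t ht => ?_⟩
  have hlt : t < ((⌊t⌋₊ + 1 : ℕ) : ℝ) := by exact_mod_cast Nat.lt_floor_add_one t
  have h := (hα (⌊t⌋₊ + 1) t ⟨ht, hlt.le⟩).congr (f₁ := fun t => α (⌊t⌋₊ + 1) t)
    (hx (⌊t⌋₊ + 1)) rfl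
  refine h.mono_of_mem_nhdsWithin ?_
  filter_upwards [self_mem_nhdsWithin, mem_nhdsWithin_of_mem_nhds (Iio_mem_nhds hlt)] with s h1 h2
  exact ⟨h1, le_of_lt h2⟩

/-- Barrier principle: a function that starts nonnegative and has nonnegative derivative
wherever it is negative stays nonnegative. -/
lemma nonneg_of_deriv_nonneg_of_neg {f f' : ℝ → ℝ} (h0 : 0 ≤ f 0)
    (hf : ∀ t ≥ (0 : ℝ), HasDerivWithinAt f (f' t) (Set.Ici (0 : ℝ)) t)
    (hf' : ∀ t ≥ (0 : ℝ), f t < 0 → 0 ≤ f' t) :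
    ∀ t ≥ (0 : ℝ), 0 ≤ f t := by
  intro t ht
  -- For every `ε > 0`, the strict fencing theorem compares `-f` with `s ↦ ε * (1 + s)`.
  have key : ∀ ε > (0 : ℝ), -f t ≤ ε * (1 + t) := by
    intro ε hε
    refine image_le_of_deriv_right_lt_deriv_boundary (f := fun s => -f s) (f' := fun s => -f' s)
      (a := 0) (b := t) (B := fun s => ε * (1 + s)) (B' := fun _ => ε)
      (fun s hs => (hf s hs.1).continuousWithinAt.neg.mono Set.Icc_subset_Ici_self)
      (fun s hs => (hf s hs.1).neg.mono (Set.Ici_subset_Ici.2 hs.1))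
      (by linarith) (fun s => ?_) (fun s hs hEq => ?_) ⟨ht, le_rfl⟩
    · simpa using ((hasDerivAt_id s).const_add 1).const_mul ε
    · have : 0 < ε * (1 + s) := mul_pos hε (by linarith [hs.1])
      have := hf' s hs.1 (by linarith)
      linarith
  by_contra! hneg
  have h1t : 0 < 1 + t := by linarith
  have h := key (-f t / (2 * (1 + t))) (div_pos (by linarith) (by linarith))
  have : -f t / (2 * (1 + t)) * (1 + t) = -f t / 2 := by field_simp
  linarith

/-- The logarithm with its argument truncated to `[δ, 1]`. -/
noncomputable def clampLog (δ u : ℝ) : ℝ := Real.log (max (min u 1) δ)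

lemma clampLog_of_mem {δ u : ℝ} (h : δ ≤ u) (h1 : u ≤ 1) : clampLog δ u = Real.log u := by
  rw [clampLog, min_eq_left h1, max_eq_left h]

lemma clampLog_of_le {δ u : ℝ} (h : u ≤ δ) : clampLog δ u = Real.log δ := by
  rw [clampLog, max_eq_right ((min_le_left _ _).trans h)]

lemma log_le_clampLog {δ : ℝ} (hδ : 0 < δ) (u : ℝ) : Real.log δ ≤ clampLog δ u :=
  Real.log_le_log hδ (le_max_right _ _)

lemma clampLog_nonpos {δ : ℝ} (hδ : 0 < δ) (hδ1 : δ ≤ 1) (u : ℝ) : clampLog δ u ≤ 0 :=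
  Real.log_nonpos (hδ.le.trans (le_max_right _ _)) (max_le (min_le_right _ _) hδ1)

lemma abs_clampLog_sub_le {δ : ℝ} (hδ : 0 < δ) (u w : ℝ) :
    |clampLog δ u - clampLog δ w| ≤ δ⁻¹ * |u - w| := by
  have hlog : ∀ a b : ℝ, δ ≤ a → δ ≤ b → Real.log b - Real.log a ≤ δ⁻¹ * |b - a| := by
    intro a b ha hb
    have ha0 := hδ.trans_le ha
    have hb0 := hδ.trans_le hb
    calc Real.log b - Real.log a = Real.log (b / a) := (Real.log_div hb0.ne' ha0.ne').symm
      _ ≤ b / a - 1 := Real.log_le_sub_one_of_pos (div_pos hb0 ha0)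
      _ = a⁻¹ * (b - a) := by field_simp
      _ ≤ a⁻¹ * |b - a| := by gcongr; exact le_abs_self _
      _ ≤ δ⁻¹ * |b - a| := by gcongr
  have hclamp : |max (min u 1) δ - max (min w 1) δ| ≤ |u - w| :=
    (abs_max_sub_max_le_abs _ _ _).trans
      ((abs_min_sub_min_le_max u 1 w 1).trans (by simp))
  have hle : |clampLog δ u - clampLog δ w| ≤ δ⁻¹ * |max (min u 1) δ - max (min w 1) δ| := by
    refine abs_sub_le_iff.2 ⟨hlog _ _ (le_max_right _ _) (le_max_right _ _), ?_⟩
    rw [abs_sub_comm]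
    exact hlog _ _ (le_max_right _ _) (le_max_right _ _)
  exact hle.trans (by gcongr)

/-- The gradient field of the SRB entropy with the logarithm replaced by `clampLog δ`. -/
noncomputable def entropyField (n : ℕ) (δ : ℝ) (x : Fin n → ℝ) : Fin n → ℝ :=
  fun k => -clampLog δ (x k) + (1 / (n : ℝ)) * ∑ i, clampLog δ (x i)

lemma abs_mean_le {n : ℕ} (hn : 0 < n) {c : ℝ} {f : Fin n → ℝ} (hf : ∀ i, |f i| ≤ c) :
    |(1 / (n : ℝ)) * ∑ i, f i| ≤ c := by
  have hn' : (0 : ℝ) < n := by exact_mod_cast hn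
  have h : |∑ i, f i| ≤ n * c :=
    (Finset.abs_sum_le_sum_abs _ _).trans
      ((Finset.sum_le_sum fun i _ => hf i).trans (by simp))
  rw [abs_mul, abs_of_pos (by positivity : (0 : ℝ) < 1 / n), one_div, inv_mul_le_iff₀ hn']
  exact h

lemma entropyField_norm_le {n : ℕ} (hn : 0 < n) {δ : ℝ} (hδ : 0 < δ) (hδ1 : δ ≤ 1)
    (x : Fin n → ℝ) : ‖entropyField n δ x‖ ≤ (2 * |Real.log δ|).toNNReal := by
  rw [Real.coe_toNNReal _ (by positivity)]
  have h : ∀ u, |clampLog δ u| ≤ |Real.log δ| := fun u => by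
    rw [abs_of_nonpos (clampLog_nonpos hδ hδ1 u), abs_of_nonpos (Real.log_nonpos hδ.le hδ1)]
    linarith [log_le_clampLog hδ u]
  refine (pi_norm_le_iff_of_nonneg (by positivity)).2 fun k => ?_
  rw [Real.norm_eq_abs, entropyField]
  refine (abs_add_le _ _).trans ?_
  rw [abs_neg]
  linarith [h (x k), abs_mean_le hn fun i => h (x i)]

lemma entropyField_lipschitz {n : ℕ} (hn : 0 < n) {δ : ℝ} (hδ : 0 < δ) :
    LipschitzWith (2 * δ⁻¹).toNNReal (entropyField n δ) := by
  refine LipschitzWith.of_dist_le_mul fun x y => ?_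
  rw [Real.coe_toNNReal _ (by positivity)]
  have h : ∀ i, |clampLog δ (x i) - clampLog δ (y i)| ≤ δ⁻¹ * dist x y := fun i =>
    (abs_clampLog_sub_le hδ _ _).trans (by gcongr; exact dist_le_pi_dist x y i)
  refine (dist_pi_le_iff (by positivity)).2 fun k => ?_
  have heq : entropyField n δ x k - entropyField n δ y k =
      -(clampLog δ (x k) - clampLog δ (y k)) +
        (1 / (n : ℝ)) * ∑ i, (clampLog δ (x i) - clampLog δ (y i)) := by
    simp only [entropyField, Finset.sum_sub_distrib]
    ring
  rw [Real.dist_eq, heq]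
  refine (abs_add_le _ _).trans ?_
  rw [abs_neg]
  linarith [h k, abs_mean_le hn h]

lemma sum_entropyField {n : ℕ} (hn : 0 < n) (δ : ℝ) (x : Fin n → ℝ) :
    ∑ k, entropyField n δ x k = 0 := by
  have hn' : (n : ℝ) ≠ 0 := by exact_mod_cast hn.ne'
  simp only [entropyField, Finset.sum_add_distrib, Finset.sum_neg_distrib, Finset.sum_const,
    Finset.card_univ, Fintype.card_fin, nsmul_eq_mul]
  field_simp
  ring

/-- Below the level `δ` the truncated field points upwards, since `clampLog δ` is minimal there. -/
lemma entropyField_nonneg {n : ℕ} (hn : 0 < n) {δ : ℝ} (hδ : 0 < δ) {x : Fin n → ℝ} {k : Fin n}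
    (hk : x k ≤ δ) : 0 ≤ entropyField n δ x k := by
  have hn' : (0 : ℝ) < n := by exact_mod_cast hn
  have h : n * Real.log δ ≤ ∑ i, clampLog δ (x i) := by
    calc n * Real.log δ = ∑ _i : Fin n, Real.log δ := by simp
      _ ≤ _ := Finset.sum_le_sum fun i _ => log_le_clampLog hδ (x i)
  have h2 : Real.log δ ≤ (1 / (n : ℝ)) * ∑ i, clampLog δ (x i) := by
    rwa [one_div, le_inv_mul_iff₀ hn']
  rw [entropyField, clampLog_of_le hk]
  linarith

/-- Global existence of the gradient flow of the SRB entropy: for every initial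
point `x⁰` in the open simplex `{0 < x_k < 1, Σ x_k = 1}` there is a solution, defined for all
`t ≥ 0`, of the system `x_k' = -ln x_k + (1/n) Σ_i ln x_i` remaining in that simplex. -/
theorem srb_gradient_flow_global_existence (n : ℕ) (hn : 2 ≤ n)
    (x₀ : Fin n → ℝ) (hx₀ : ∀ k, 0 < x₀ k ∧ x₀ k < 1) (hsum₀ : ∑ k, x₀ k = 1) :
    ∃ x : ℝ → Fin n → ℝ, x 0 = x₀ ∧
      ∀ t ≥ (0:ℝ), ∀ k,
        HasDerivWithinAt (fun s => x s k)
          (-Real.log (x t k) + (1 / (n:ℝ)) * ∑ i, Real.log (x t i)) (Set.Ici (0:ℝ)) t ∧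
        (0 < x t k ∧ x t k < 1) ∧
        ∑ j, x t j = 1 := by
  have hn0 : 0 < n := by omega
  have : Nonempty (Fin n) := ⟨⟨0, hn0⟩⟩
  have : Nontrivial (Fin n) := Fin.nontrivial_iff_two_le.2 hn
  obtain ⟨k₀, hk₀⟩ := Finite.exists_min x₀
  obtain ⟨δ, hδdef⟩ : ∃ δ, δ = x₀ k₀ := ⟨_, rfl⟩
  rw [← hδdef] at hk₀
  have hδ : 0 < δ := hδdef ▸ (hx₀ k₀).1
  have hδ1 : δ ≤ 1 := hδdef ▸ (hx₀ k₀).2.le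
  obtain ⟨x, hx0, hx⟩ := exists_global_solution (entropyField_lipschitz hn0 hδ)
    (entropyField_norm_le hn0 hδ hδ1) x₀
  have hxk : ∀ t ≥ (0 : ℝ), ∀ k, HasDerivWithinAt (fun s => x s k)
      (entropyField n δ (x t) k) (Set.Ici (0 : ℝ)) t :=
    fun t ht k => hasDerivWithinAt_pi.1 (hx t ht) k
  have hlow : ∀ k, ∀ t ≥ (0 : ℝ), δ ≤ x t k := fun k t ht =>
    sub_nonneg.1 <| nonneg_of_deriv_nonneg_of_neg (f := fun s => x s k - δ)
      (by simpa [hx0] using hk₀ k) (fun s hs => (hxk s hs k).sub_const δ)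
      (fun s _ hneg => entropyField_nonneg hn0 hδ (sub_neg.1 hneg).le) t ht
  have hsum : ∀ t ≥ (0 : ℝ), ∑ j, x t j = 1 := by
    intro t ht
    have hd : ∀ s ≥ (0 : ℝ), HasDerivWithinAt (fun s => ∑ j, x s j) 0 (Set.Ici (0 : ℝ)) s := by
      intro s hs
      have h := HasDerivWithinAt.fun_sum (u := Finset.univ) fun j _ => hxk s hs j
      rwa [sum_entropyField hn0] at h
    have h := constant_of_has_deriv_right_zero (a := 0) (b := t)
      (fun s hs => (hd s hs.1).continuousWithinAt.mono Set.Icc_subset_Ici_self)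
      (fun s hs => (hd s hs.1).mono (Set.Ici_subset_Ici.2 hs.1)) t ⟨ht, le_rfl⟩
    rw [h, hx0, hsum₀]
  have hlt : ∀ t ≥ (0 : ℝ), ∀ k, x t k < 1 := by
    intro t ht k
    rw [← hsum t ht]
    obtain ⟨j, hj⟩ := exists_ne k
    exact Finset.single_lt_sum hj (Finset.mem_univ _) (Finset.mem_univ _)
      (hδ.trans_le (hlow j t ht)) fun i _ _ => hδ.le.trans (hlow i t ht)
  refine ⟨x, hx0, fun t ht k => ⟨?_, ⟨hδ.trans_le (hlow k t ht), hlt t ht k⟩, hsum t ht⟩⟩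
  have hlog : ∀ i, clampLog δ (x t i) = Real.log (x t i) := fun i =>
    clampLog_of_mem (hlow i t ht) (hlt t ht i).le
  simpa only [entropyField, hlog] using hxk t ht k
end
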